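/- arXiv:2106.00500 — 2 statements merged into one kernel-verified Lean document; each statement's English description precedes it below -/
import Mathlib

section
/- For every N ≥ 2, β > 0, J > 0, b ≥ 0 and every realization of the disorder, the transverse magnetization of the quantum Sherrington–Kirkpatrick model satisfies 0 ≤ ⟨S_1^x⟩ ≤ tanh(βb). -/
open Matrix MeasureTheory ProbabilityTheory

noncomputable section

abbrev Conf (N : ℕ) := Fin N → Fin 2

def Sz (N : ℕ) (j : Fin N) : Matrix (Conf N) (Conf N) ℂ :=
  Matrix.diagonal fun σ => if σ j = 0 then 1 else -1

def Sx (N : ℕ) (j : Fin N) : Matrix (Conf N) (Conf N) ℂ :=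
  Matrix.of fun σ τ => if τ = Function.update σ j (1 - σ j) then 1 else 0

def UN (N : ℕ) (g : Fin N → Fin N → ℝ) : Matrix (Conf N) (Conf N) ℂ :=
  (-(1 / Real.sqrt N)) • ∑ j : Fin N, ∑ k : Fin N,
    if j < k then g j k • (Sz N j * Sz N k) else 0

def HN (N : ℕ) (J b : ℝ) (g : Fin N → Fin N → ℝ) : Matrix (Conf N) (Conf N) ℂ :=
  J • UN N g - b • ∑ j : Fin N, Sx N j

/-- Gibbs expectation (real part of the trace ratio). -/
def gibbs {n : Type*} [Fintype n] [DecidableEq n] (β : ℝ) (H A : Matrix n n ℂ) : ℝ :=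
  ((NormedSpace.exp ((-β) • H) * A).trace / (NormedSpace.exp ((-β) • H)).trace).re

/-!
Split off the field at one site `j`: the exponent `-βH` is `B + sS` with `S = Sˣⱼ`, `S² = 1` and
`s = βb`. Put `f(s) = Tr exp(B + sS)`. Expanding traces in the eigenbases of `A` and `A'` turns
scalar inequalities for `exp` into inequalities for `Tr exp`. The tangent-line inequality becomes
Klein's inequality, so `f` is convex with `f'(s) = Tr (exp(B + sS) S)`. The comparison of the
logarithmic and arithmetic means, `(x - y)(eˣ - eʸ) ≤ (x - y)² (eˣ + eʸ) / 2`, becomes `f'' ≤ f`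
because `S² = 1`. The reflection `Z = Sᶻⱼ` commutes with `B` and anticommutes with `S`, so
`f'(0) = 0`. Convexity now gives `f' ≥ 0` on `s ≥ 0`, and
`(f' cosh - f sinh)' = (f'' - f) cosh ≤ 0` gives `f'/f ≤ tanh`.
-/

section Scalar

lemma mul_sinh_le_sq_mul_cosh (x : ℝ) : x * Real.sinh x ≤ x ^ 2 * Real.cosh x := by
  wlog hx : 0 < x generalizing x with h
  · rcases (not_lt.mp hx).eq_or_lt with rfl | hx
    · simp
    · simpa using h (-x) (neg_pos.mpr hx)
  obtain ⟨c, ⟨hc, hcx⟩, hslope⟩ := exists_hasDerivAt_eq_slope Real.sinh Real.cosh hx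
    Real.continuous_sinh.continuousOn fun y _ => Real.hasDerivAt_sinh y
  have hsinh : Real.sinh x = Real.cosh c * x := by
    rw [hslope, Real.sinh_zero, sub_zero, sub_zero, div_mul_cancel₀ _ hx.ne']
  have hcosh : Real.cosh c ≤ Real.cosh x := by
    rw [Real.cosh_le_cosh, abs_of_pos hc, abs_of_pos hx]
    exact hcx.le
  rw [hsinh]
  nlinarith [mul_le_mul_of_nonneg_left hcosh (sq_nonneg x)]

lemma sub_mul_exp_sub_exp_le (x y : ℝ) :
    (x - y) * (Real.exp x - Real.exp y) ≤ (x - y) ^ 2 / 2 * (Real.exp x + Real.exp y) := by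
  obtain ⟨m, u, rfl, rfl⟩ : ∃ m u, x = m + u ∧ y = m - u :=
    ⟨(x + y) / 2, (x - y) / 2, by ring, by ring⟩
  have h := mul_le_mul_of_nonneg_left (mul_sinh_le_sq_mul_cosh u) (Real.exp_pos m).le
  rw [Real.sinh_eq, Real.cosh_eq] at h
  rw [sub_eq_add_neg m u, Real.exp_add, Real.exp_add]
  linarith

lemma sub_mul_exp_le_exp_sub_exp (x y : ℝ) :
    (x - y) * Real.exp y ≤ Real.exp x - Real.exp y := by
  have h := mul_le_mul_of_nonneg_right (Real.add_one_le_exp (x - y)) (Real.exp_pos y).le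
  rw [← Real.exp_add, sub_add_cancel] at h
  linarith

lemma deriv_mul_cosh_le_mul_sinh {f f' f'' : ℝ → ℝ} (hf : ∀ x, HasDerivAt f (f' x) x)
    (hf' : ∀ x, HasDerivAt f' (f'' x) x) (hle : ∀ x, f'' x ≤ f x) (h0 : f' 0 = 0)
    {s : ℝ} (hs : 0 ≤ s) : f' s * Real.cosh s ≤ f s * Real.sinh s := by
  have hderiv (x : ℝ) : HasDerivAt (fun x => f' x * Real.cosh x - f x * Real.sinh x)
      ((f'' x - f x) * Real.cosh x) x :=
    (((hf' x).mul (Real.hasDerivAt_cosh x)).sub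
      ((hf x).mul (Real.hasDerivAt_sinh x))).congr_deriv (by ring)
  have hanti : Antitone fun x => f' x * Real.cosh x - f x * Real.sinh x :=
    antitone_of_hasDerivAt_nonpos hderiv fun x =>
      mul_nonpos_of_nonpos_of_nonneg (sub_nonpos.mpr (hle x)) (Real.cosh_pos x).le
  simpa [h0] using hanti hs

end Scalar

section DoubleTrace

variable {n 𝕜 : Type*} [Fintype n] [DecidableEq n] [RCLike 𝕜] {A B : Matrix n n 𝕜}

/-- The matrix of `X` when its domain carries the eigenbasis of `B` and its codomain carries that
of `A`. For `X = 1` its entries are the overlaps of the two eigenbases. -/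
def eigenbasesMatrix (hA : A.IsHermitian) (hB : B.IsHermitian) (X : Matrix n n 𝕜) :
    Matrix n n 𝕜 :=
  (hA.eigenvectorUnitary : Matrix n n 𝕜)ᴴ * X * (hB.eigenvectorUnitary : Matrix n n 𝕜)

lemma cfc_eq_mul_diagonal_mul (hA : A.IsHermitian) (f : ℝ → ℝ) :
    cfc f A = (hA.eigenvectorUnitary : Matrix n n 𝕜) *
      diagonal (fun i => (f (hA.eigenvalues i) : 𝕜)) *
        (hA.eigenvectorUnitary : Matrix n n 𝕜)ᴴ := by
  rw [hA.cfc_eq, IsHermitian.cfc, Unitary.conjStarAlgAut_apply]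
  rfl

lemma eq_eigenvectorUnitary_mul_diagonal_mul (hA : A.IsHermitian) :
    A = (hA.eigenvectorUnitary : Matrix n n 𝕜) *
      diagonal (fun i => (hA.eigenvalues i : 𝕜)) *
        (hA.eigenvectorUnitary : Matrix n n 𝕜)ᴴ :=
  (cfc_id ℝ A hA.isSelfAdjoint).symm.trans (cfc_eq_mul_diagonal_mul hA id)

lemma cfc_exp_eq_exp (hA : A.IsHermitian) : cfc Real.exp A = NormedSpace.exp A := by
  set U : Matrix n n 𝕜 := ↑hA.eigenvectorUnitary
  have hinv : U⁻¹ = Uᴴ := Matrix.inv_eq_left_inv (Unitary.coe_star_mul_self _)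
  have hunit : IsUnit U := (Unitary.toUnits hA.eigenvectorUnitary).isUnit
  have hspec : A = U * diagonal (fun i => (hA.eigenvalues i : 𝕜)) * U⁻¹ := by
    rw [hinv]
    exact eq_eigenvectorUnitary_mul_diagonal_mul hA
  conv_rhs => rw [hspec, Matrix.exp_conj _ _ hunit, Matrix.exp_diagonal, hinv]
  rw [cfc_eq_mul_diagonal_mul hA]
  congr 3
  funext i
  rw [Pi.coe_exp, Real.exp_eq_exp_ℝ]
  exact NormedSpace.algebraMap_exp_comm _

lemma re_trace_exp_pos [Nonempty n] (hA : A.IsHermitian) :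
    0 < RCLike.re (NormedSpace.exp A).trace := by
  have hUU : (hA.eigenvectorUnitary : Matrix n n 𝕜)ᴴ * hA.eigenvectorUnitary = 1 :=
    Unitary.coe_star_mul_self _
  rw [← cfc_exp_eq_exp hA, cfc_eq_mul_diagonal_mul hA, Matrix.trace_mul_comm, ← Matrix.mul_assoc,
    hUU, Matrix.one_mul, trace_diagonal, map_sum]
  simp only [RCLike.ofReal_re]
  exact Finset.sum_pos (fun i _ => Real.exp_pos _) Finset.univ_nonempty

lemma trace_cfc_mul_mul_cfc_mul (hA : A.IsHermitian) (hB : B.IsHermitian) (f g : ℝ → ℝ)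
    (X Y : Matrix n n 𝕜) :
    (cfc f A * X * cfc g B * Yᴴ).trace = ∑ j, ∑ k,
      (f (hA.eigenvalues j) * g (hB.eigenvalues k) : 𝕜) *
        (eigenbasesMatrix hA hB X j k * star (eigenbasesMatrix hA hB Y j k)) := by
  set Df : Matrix n n 𝕜 := diagonal fun i => (f (hA.eigenvalues i) : 𝕜) with hDf
  set Dg : Matrix n n 𝕜 := diagonal fun i => (g (hB.eigenvalues i) : 𝕜) with hDg
  have hcycle : (cfc f A * X * cfc g B * Yᴴ).trace =
      (Df * eigenbasesMatrix hA hB X * Dg * (eigenbasesMatrix hA hB Y)ᴴ).trace := by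
    rw [cfc_eq_mul_diagonal_mul hA, cfc_eq_mul_diagonal_mul hB, ← hDf, ← hDg]
    simp only [eigenbasesMatrix, conjTranspose_mul, conjTranspose_conjTranspose, Matrix.mul_assoc]
    rw [Matrix.trace_mul_comm]
    simp only [Matrix.mul_assoc]
  rw [hcycle, trace]
  refine Finset.sum_congr rfl fun j _ => ?_
  rw [diag_apply, mul_apply]
  refine Finset.sum_congr rfl fun k _ => ?_
  rw [mul_diagonal, diagonal_mul, conjTranspose_apply]
  ring

lemma eigenbasesMatrix_left (hA : A.IsHermitian) (hB : B.IsHermitian) (j k : n) :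
    eigenbasesMatrix hA hB A j k =
      (hA.eigenvalues j : 𝕜) * eigenbasesMatrix hA hB 1 j k := by
  set U : Matrix n n 𝕜 := ↑hA.eigenvectorUnitary with hU
  have hUU : Uᴴ * U = 1 := Unitary.coe_star_mul_self _
  have hdiag : Uᴴ * A = diagonal (fun i => (hA.eigenvalues i : 𝕜)) * Uᴴ := by
    calc Uᴴ * A = Uᴴ * (U * diagonal (fun i => (hA.eigenvalues i : 𝕜)) * Uᴴ) :=
          congrArg (Uᴴ * ·) (eq_eigenvectorUnitary_mul_diagonal_mul hA)
      _ = diagonal (fun i => (hA.eigenvalues i : 𝕜)) * Uᴴ := by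
          rw [← Matrix.mul_assoc, ← Matrix.mul_assoc, hUU, Matrix.one_mul]
  rw [eigenbasesMatrix, eigenbasesMatrix, ← hU, hdiag, Matrix.mul_assoc, diagonal_mul,
    Matrix.mul_one]

lemma eigenbasesMatrix_right (hA : A.IsHermitian) (hB : B.IsHermitian) (j k : n) :
    eigenbasesMatrix hA hB B j k =
      eigenbasesMatrix hA hB 1 j k * (hB.eigenvalues k : 𝕜) := by
  set V : Matrix n n 𝕜 := ↑hB.eigenvectorUnitary with hV
  have hVV : Vᴴ * V = 1 := Unitary.coe_star_mul_self _
  have hdiag : B * V = V * diagonal fun i => (hB.eigenvalues i : 𝕜) := by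
    calc B * V = V * diagonal (fun i => (hB.eigenvalues i : 𝕜)) * Vᴴ * V :=
          congrArg (· * V) (eq_eigenvectorUnitary_mul_diagonal_mul hB)
      _ = V * diagonal fun i => (hB.eigenvalues i : 𝕜) := by
          rw [Matrix.mul_assoc, hVV, Matrix.mul_one]
  rw [eigenbasesMatrix, eigenbasesMatrix, ← hV, Matrix.mul_assoc, hdiag, ← Matrix.mul_assoc,
    mul_diagonal, Matrix.mul_one]

lemma eigenbasesMatrix_sub (hA : A.IsHermitian) (hB : B.IsHermitian) (j k : n) :
    eigenbasesMatrix hA hB (A - B) j k =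
      ((hA.eigenvalues j - hB.eigenvalues k : ℝ) : 𝕜) * eigenbasesMatrix hA hB 1 j k := by
  have hsub : eigenbasesMatrix hA hB (A - B) =
      eigenbasesMatrix hA hB A - eigenbasesMatrix hA hB B := by
    simp only [eigenbasesMatrix, Matrix.mul_sub, Matrix.sub_mul]
  rw [hsub, Matrix.sub_apply, eigenbasesMatrix_left, eigenbasesMatrix_right, RCLike.ofReal_sub]
  ring

lemma re_trace_cfc_mul_cfc (hA : A.IsHermitian) (hB : B.IsHermitian) (f g : ℝ → ℝ) :
    RCLike.re (cfc f A * cfc g B).trace = ∑ j, ∑ k,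
      f (hA.eigenvalues j) * g (hB.eigenvalues k) * ‖eigenbasesMatrix hA hB 1 j k‖ ^ 2 := by
  have h := trace_cfc_mul_mul_cfc_mul hA hB f g 1 1
  rw [Matrix.mul_one, conjTranspose_one, Matrix.mul_one] at h
  simp only [h, RCLike.star_def, RCLike.mul_conj]
  norm_cast

lemma re_trace_cfc_mul_sub_mul_cfc (hA : A.IsHermitian) (hB : B.IsHermitian) (f g : ℝ → ℝ) :
    RCLike.re (cfc f A * (A - B) * cfc g B).trace = ∑ j, ∑ k,
      f (hA.eigenvalues j) * g (hB.eigenvalues k) *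
        (hA.eigenvalues j - hB.eigenvalues k) * ‖eigenbasesMatrix hA hB 1 j k‖ ^ 2 := by
  have h := trace_cfc_mul_mul_cfc_mul hA hB f g (A - B) 1
  rw [conjTranspose_one, Matrix.mul_one] at h
  rw [h]
  simp only [RCLike.star_def, eigenbasesMatrix_sub, mul_assoc, RCLike.mul_conj]
  norm_cast

lemma re_trace_cfc_mul_sub_mul_cfc_mul_sub (hA : A.IsHermitian) (hB : B.IsHermitian)
    (f g : ℝ → ℝ) :
    RCLike.re (cfc f A * (A - B) * cfc g B * (A - B)).trace = ∑ j, ∑ k,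
      f (hA.eigenvalues j) * g (hB.eigenvalues k) *
        (hA.eigenvalues j - hB.eigenvalues k) ^ 2 * ‖eigenbasesMatrix hA hB 1 j k‖ ^ 2 := by
  have h := trace_cfc_mul_mul_cfc_mul hA hB f g (A - B) (A - B)
  rw [(hA.sub hB).eq] at h
  simp only [h, RCLike.star_def, eigenbasesMatrix_sub, map_mul, RCLike.conj_ofReal,
    mul_mul_mul_comm _ (eigenbasesMatrix hA hB 1 _ _), RCLike.mul_conj, ← mul_assoc]
  norm_cast
  simp only [pow_two, mul_assoc]

theorem re_trace_sub_mul_exp_le (hA : A.IsHermitian) (hB : B.IsHermitian) :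
    RCLike.re ((A - B) * NormedSpace.exp B).trace ≤
      RCLike.re (NormedSpace.exp A).trace - RCLike.re (NormedSpace.exp B).trace := by
  have h₁ := re_trace_cfc_mul_cfc hA hB Real.exp fun _ => 1
  have h₂ := re_trace_cfc_mul_cfc hA hB (fun _ => 1) Real.exp
  have h₃ := re_trace_cfc_mul_sub_mul_cfc hA hB (fun _ => 1) Real.exp
  simp only [cfc_const_one ℝ A hA.isSelfAdjoint, cfc_const_one ℝ B hB.isSelfAdjoint,
    cfc_exp_eq_exp hA, cfc_exp_eq_exp hB, Matrix.mul_one, Matrix.one_mul] at h₁ h₂ h₃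
  rw [h₁, h₂, h₃]
  simp only [← Finset.sum_sub_distrib, ← sub_mul]
  refine Finset.sum_le_sum fun j _ => Finset.sum_le_sum fun k _ =>
    mul_le_mul_of_nonneg_right ?_ (sq_nonneg _)
  linarith [sub_mul_exp_le_exp_sub_exp (hA.eigenvalues j) (hB.eigenvalues k)]

theorem re_trace_sub_mul_exp_sub_exp_le (hA : A.IsHermitian) (hB : B.IsHermitian) :
    RCLike.re ((A - B) * (NormedSpace.exp A - NormedSpace.exp B)).trace ≤
      RCLike.re ((A - B) ^ 2 * (NormedSpace.exp A + NormedSpace.exp B)).trace / 2 := by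
  have h₁ := re_trace_cfc_mul_sub_mul_cfc hA hB Real.exp fun _ => 1
  have h₂ := re_trace_cfc_mul_sub_mul_cfc hA hB (fun _ => 1) Real.exp
  have h₃ := re_trace_cfc_mul_sub_mul_cfc_mul_sub hA hB Real.exp fun _ => 1
  have h₄ := re_trace_cfc_mul_sub_mul_cfc_mul_sub hA hB (fun _ => 1) Real.exp
  simp only [cfc_const_one ℝ A hA.isSelfAdjoint, cfc_const_one ℝ B hB.isSelfAdjoint,
    cfc_exp_eq_exp hA, cfc_exp_eq_exp hB, Matrix.mul_one, Matrix.one_mul] at h₁ h₂ h₃ h₄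
  rw [Matrix.trace_mul_comm] at h₁
  rw [Matrix.trace_mul_cycle, Matrix.trace_mul_comm, ← Matrix.mul_assoc,
    ← pow_two] at h₃
  rw [Matrix.trace_mul_comm, ← Matrix.mul_assoc, ← pow_two] at h₄
  rw [Matrix.mul_sub, Matrix.mul_add, trace_sub, trace_add, map_sub, map_add, h₁, h₂, h₃, h₄]
  simp only [← Finset.sum_sub_distrib, ← Finset.sum_add_distrib, Finset.sum_div, ← sub_mul,
    ← add_mul, mul_div_right_comm]
  refine Finset.sum_le_sum fun j _ => Finset.sum_le_sum fun k _ =>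
    mul_le_mul_of_nonneg_right ?_ (sq_nonneg _)
  linarith [sub_mul_exp_sub_exp_le (hA.eigenvalues j) (hB.eigenvalues k)]

end DoubleTrace

section GibbsTrace

lemma isHermitian_add_smul {n 𝕜 : Type*} [RCLike 𝕜] {B S : Matrix n n 𝕜} (hB : B.IsHermitian)
    (hS : S.IsHermitian) (t : ℝ) : (B + t • S).IsHermitian :=
  hB.add (hS.smul (.all t))

variable {n 𝕜 : Type*} [Fintype n] [DecidableEq n] [RCLike 𝕜]

/-- The unnormalised Gibbs expectation of the observable `M` for the exponent `B + t • S`. For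
`M = 1` it is the partition function. -/
def gibbsTrace (B S M : Matrix n n 𝕜) (t : ℝ) : ℝ :=
  RCLike.re (NormedSpace.exp (B + t • S) * M).trace

section

attribute [local instance] Matrix.linftyOpNormedRing Matrix.linftyOpNormedAlgebra

lemma differentiable_gibbsTrace (B S M : Matrix n n 𝕜) : Differentiable ℝ (gibbsTrace B S M) := by
  have hexp : Differentiable ℝ (NormedSpace.exp : Matrix n n 𝕜 → Matrix n n 𝕜) := fun X =>
    (NormedSpace.exp_analytic (𝕂 := ℝ) X).differentiableAt
  have hline : Differentiable ℝ fun t : ℝ => B + t • S := by fun_prop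
  let L : Matrix n n 𝕜 →ₗ[ℝ] ℝ :=
    RCLike.reLm ∘ₗ traceLinearMap n ℝ 𝕜 ∘ₗ LinearMap.mulRight ℝ M
  exact L.toContinuousLinearMap.differentiable.comp (hexp.comp hline)

end

variable {B S : Matrix n n 𝕜}

lemma sub_mul_gibbsTrace_le (hB : B.IsHermitian) (hS : S.IsHermitian) (s t : ℝ) :
    (t - s) * gibbsTrace B S S s ≤ gibbsTrace B S 1 t - gibbsTrace B S 1 s := by
  have h := re_trace_sub_mul_exp_le (isHermitian_add_smul hB hS t) (isHermitian_add_smul hB hS s)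
  rw [add_sub_add_left_eq_sub, ← sub_smul, Matrix.smul_mul, trace_smul, RCLike.smul_re,
    Matrix.trace_mul_comm] at h
  simpa only [gibbsTrace, Matrix.mul_one] using h

lemma monotone_gibbsTrace_self (hB : B.IsHermitian) (hS : S.IsHermitian) :
    Monotone (gibbsTrace B S S) := by
  intro s t hst
  rcases hst.eq_or_lt with rfl | hst
  · rfl
  · have h₁ := sub_mul_gibbsTrace_le hB hS s t
    have h₂ := sub_mul_gibbsTrace_le hB hS t s
    exact le_of_mul_le_mul_left (by linarith) (sub_pos.mpr hst)

-- A differentiable function lying above a line through its graph at `s` has that line as its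
-- tangent there, so no formula for the derivative of the matrix exponential is needed.
lemma hasDerivAt_gibbsTrace_one (hB : B.IsHermitian) (hS : S.IsHermitian) (s : ℝ) :
    HasDerivAt (gibbsTrace B S 1) (gibbsTrace B S S s) s := by
  have hf := (differentiable_gibbsTrace B S 1 s).hasDerivAt
  have hgap : HasDerivAt
      (fun t => gibbsTrace B S 1 t - gibbsTrace B S 1 s - (t - s) * gibbsTrace B S S s)
      (deriv (gibbsTrace B S 1) s - 1 * gibbsTrace B S S s) s :=
    (hf.sub_const _).sub (((hasDerivAt_id s).sub_const s).mul_const _)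
  have hmin : IsLocalMin
      (fun t => gibbsTrace B S 1 t - gibbsTrace B S 1 s - (t - s) * gibbsTrace B S S s) s :=
    .of_forall fun t => by
      simpa using sub_mul_gibbsTrace_le hB hS s t
  have hzero := hmin.hasDerivAt_eq_zero hgap
  rw [one_mul, sub_eq_zero] at hzero
  exact hzero ▸ hf

lemma slope_gibbsTrace_self_le (hB : B.IsHermitian) (hS : S.IsHermitian) (hSS : S * S = 1)
    {s t : ℝ} (hst : t ≠ s) :
    slope (gibbsTrace B S S) s t ≤ (gibbsTrace B S 1 t + gibbsTrace B S 1 s) / 2 := by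
  have h := re_trace_sub_mul_exp_sub_exp_le (isHermitian_add_smul hB hS t)
    (isHermitian_add_smul hB hS s)
  rw [add_sub_add_left_eq_sub, ← sub_smul, smul_pow, pow_two S, hSS, Matrix.smul_mul,
    Matrix.smul_mul, trace_smul, trace_smul, RCLike.smul_re, RCLike.smul_re, Matrix.one_mul,
    Matrix.trace_mul_comm, Matrix.sub_mul, trace_sub, trace_add, map_sub, map_add] at h
  have hpos : 0 < (t - s) ^ 2 := sq_pos_of_ne_zero (sub_ne_zero.mpr hst)
  rw [slope_def_field, ← mul_div_mul_left _ _ (sub_ne_zero.mpr hst), ← pow_two,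
    div_le_iff₀ hpos]
  simp only [gibbsTrace, Matrix.mul_one]
  linarith

lemma deriv_gibbsTrace_self_le (hB : B.IsHermitian) (hS : S.IsHermitian) (hSS : S * S = 1)
    (s : ℝ) : deriv (gibbsTrace B S S) s ≤ gibbsTrace B S 1 s := by
  have hslope := (differentiable_gibbsTrace B S S s).hasDerivAt.tendsto_slope
  have hmean : Filter.Tendsto (fun t => (gibbsTrace B S 1 t + gibbsTrace B S 1 s) / 2)
      (nhdsWithin s {s}ᶜ) (nhds ((gibbsTrace B S 1 s + gibbsTrace B S 1 s) / 2)) :=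
    (((differentiable_gibbsTrace B S 1).continuous.add_const _).div_const 2).tendsto s
      |>.mono_left nhdsWithin_le_nhds
  rw [add_self_div_two] at hmean
  exact le_of_tendsto_of_tendsto hslope hmean
    (eventually_mem_nhdsWithin.mono fun t ht => slope_gibbsTrace_self_le hB hS hSS ht)

lemma trace_mul_eq_zero_of_commute_of_semiconjBy_neg {M Z : Matrix n n 𝕜} (hZ : IsUnit Z)
    (hZM : Commute Z M) (hZS : SemiconjBy Z S (-S)) : (M * S).trace = 0 := by
  obtain ⟨Z, rfl⟩ := hZ
  refine self_eq_neg.mp ?_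
  calc (M * S).trace = (Z.val * (M * S) * Z⁻¹.val).trace := (trace_units_conj Z _).symm
    _ = (M * (-S * Z.val * Z⁻¹.val)).trace := by
      rw [← hZS.eq, ← Matrix.mul_assoc, hZM.eq]
      simp only [Matrix.mul_assoc]
    _ = -(M * S).trace := by
      rw [Units.mul_inv_cancel_right, Matrix.mul_neg, trace_neg]

lemma gibbsTrace_self_zero {Z : Matrix n n 𝕜} (hZ : IsUnit Z) (hZB : Commute Z B)
    (hZS : SemiconjBy Z S (-S)) : gibbsTrace B S S 0 = 0 := by
  rw [gibbsTrace, zero_smul, add_zero,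
    trace_mul_eq_zero_of_commute_of_semiconjBy_neg hZ hZB.exp_right hZS, map_zero]

lemma gibbsTrace_one_pos [Nonempty n] (hB : B.IsHermitian) (hS : S.IsHermitian) (t : ℝ) :
    0 < gibbsTrace B S 1 t := by
  rw [gibbsTrace, Matrix.mul_one]
  exact re_trace_exp_pos (isHermitian_add_smul hB hS t)

theorem gibbsTrace_self_div_mem_Icc [Nonempty n] {Z : Matrix n n 𝕜} (hB : B.IsHermitian)
    (hS : S.IsHermitian) (hSS : S * S = 1) (hZ : IsUnit Z) (hZB : Commute Z B)
    (hZS : SemiconjBy Z S (-S)) {s : ℝ} (hs : 0 ≤ s) :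
    gibbsTrace B S S s / gibbsTrace B S 1 s ∈ Set.Icc 0 (Real.tanh s) := by
  have hpos := gibbsTrace_one_pos hB hS s
  have hzero := gibbsTrace_self_zero hZ hZB hZS
  refine ⟨div_nonneg (hzero ▸ monotone_gibbsTrace_self hB hS hs) hpos.le, ?_⟩
  rw [Real.tanh_eq_sinh_div_cosh, div_le_div_iff₀ hpos (Real.cosh_pos s), mul_comm (Real.sinh s)]
  exact deriv_mul_cosh_le_mul_sinh (hasDerivAt_gibbsTrace_one hB hS)
    (fun x => (differentiable_gibbsTrace B S S x).hasDerivAt)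
    (deriv_gibbsTrace_self_le hB hS hSS) hzero hs

end GibbsTrace

section Gibbs

variable {n : Type*} [Fintype n] [DecidableEq n]

lemma gibbs_eq_div {β : ℝ} {H : Matrix n n ℂ} (hH : H.IsHermitian) (A : Matrix n n ℂ) :
    gibbs β H A = (NormedSpace.exp ((-β) • H) * A).trace.re /
      (NormedSpace.exp ((-β) • H)).trace.re := by
  have hexp : (NormedSpace.exp ((-β) • H)).IsHermitian := (hH.smul (.all (-β))).exp
  have hreal : ((NormedSpace.exp ((-β) • H)).trace.re : ℂ) = (NormedSpace.exp ((-β) • H)).trace :=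
    Complex.conj_eq_iff_re.mp (by
      rw [← Complex.star_def, ← trace_conjTranspose, hexp.eq])
  rw [gibbs, ← hreal, Complex.div_ofReal_re, Complex.ofReal_re]

theorem gibbs_sub_smul_mem_Icc [Nonempty n] {V S Z : Matrix n n ℂ} (hV : V.IsHermitian)
    (hS : S.IsHermitian) (hSS : S * S = 1) (hZ : IsUnit Z) (hZV : Commute Z V)
    (hZS : SemiconjBy Z S (-S)) {β b : ℝ} (hβb : 0 ≤ β * b) :
    gibbs β (V - b • S) S ∈ Set.Icc 0 (Real.tanh (β * b)) := by
  have hexponent : (-β) • (V - b • S) = (-β) • V + (β * b) • S := by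
    rw [smul_sub, smul_smul, neg_mul, neg_smul (β * b), sub_neg_eq_add]
  have h := gibbsTrace_self_div_mem_Icc (hV.smul (.all (-β))) hS hSS hZ (hZV.smul_right (-β))
    hZS hβb
  rw [gibbs_eq_div (hV.sub (hS.smul (.all b))), hexponent]
  simpa only [gibbsTrace, Matrix.mul_one, RCLike.re_to_complex] using h

end Gibbs

section Spins

variable {N : ℕ}

lemma eq_update_one_sub_comm (j : Fin N) (σ τ : Conf N) :
    τ = Function.update σ j (1 - σ j) ↔ σ = Function.update τ j (1 - τ j) := by
  constructor <;> rintro rfl <;> simp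

lemma isHermitian_Sx (j : Fin N) : (Sx N j).IsHermitian := by
  ext σ τ
  simp only [conjTranspose_apply, Sx, of_apply, eq_update_one_sub_comm j τ σ, apply_ite star,
    star_one, star_zero]

lemma Sx_mul_self (j : Fin N) : Sx N j * Sx N j = 1 := by
  ext σ τ
  simp only [mul_apply, Sx, of_apply, ite_mul, one_mul, zero_mul, Finset.sum_ite_eq',
    Finset.mem_univ, if_true, one_apply]
  simp [eq_comm]

lemma isHermitian_Sz (j : Fin N) : (Sz N j).IsHermitian :=
  isHermitian_diagonal_iff.mpr fun σ => by
    split_ifs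
    exacts [.one ℂ, (IsSelfAdjoint.one ℂ).neg]

lemma Sz_mul_self (j : Fin N) : Sz N j * Sz N j = 1 := by
  rw [Sz, diagonal_mul_diagonal, ← diagonal_one]
  congr 1
  funext σ
  split_ifs <;> norm_num

lemma isUnit_Sz (j : Fin N) : IsUnit (Sz N j) :=
  .of_mul_eq_one _ (Sz_mul_self j)

lemma commute_Sz_Sz (j k : Fin N) : Commute (Sz N j) (Sz N k) :=
  commute_diagonal _ _

lemma semiconjBy_Sz_Sx (j : Fin N) : SemiconjBy (Sz N j) (Sx N j) (-Sx N j) := by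
  ext σ τ
  simp only [Sz, Sx, mul_diagonal, diagonal_mul, of_apply, Matrix.neg_apply]
  by_cases hτ : τ = Function.update σ j (1 - σ j)
  · subst hτ
    rcases Fin.exists_fin_two.mp ⟨σ j, rfl⟩ with hσ | hσ <;> simp [hσ]
  · simp [hτ]

lemma commute_Sz_Sx {j k : Fin N} (hjk : j ≠ k) : Commute (Sz N j) (Sx N k) := by
  ext σ τ
  simp only [Sz, Sx, mul_diagonal, diagonal_mul, of_apply]
  by_cases hτ : τ = Function.update σ k (1 - σ k)
  · subst hτ
    simp [hjk]
  · simp [hτ]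

lemma isHermitian_UN (g : Fin N → Fin N → ℝ) : (UN N g).IsHermitian := by
  have hprod (j k : Fin N) : (Sz N j * Sz N k).IsHermitian :=
    ((isHermitian_Sz j).commute_iff (isHermitian_Sz k)).mp (commute_Sz_Sz j k)
  have hsum : (∑ j, ∑ k, if j < k then g j k • (Sz N j * Sz N k) else 0).IsHermitian :=
    isSelfAdjoint_sum _ fun j _ => isSelfAdjoint_sum _ fun k _ => by
      split_ifs
      exacts [(hprod j k).smul (.all (g j k)), .zero _]
  exact hsum.smul (.all _)

lemma commute_Sz_UN (i : Fin N) (g : Fin N → Fin N → ℝ) : Commute (Sz N i) (UN N g) := by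
  refine .smul_right (.sum_right _ _ _ fun j _ => .sum_right _ _ _ fun k _ => ?_) _
  split_ifs
  · exact ((commute_Sz_Sz i j).mul_right (commute_Sz_Sz i k)).smul_right _
  · exact .zero_right _

end Spins

theorem stmt9_general {N : ℕ} {U : Matrix (Conf N) (Conf N) ℂ} (hU : U.IsHermitian) {j : Fin N}
    (hjU : Commute (Sz N j) U) {b : Fin N → ℝ} {β : ℝ} (hβb : 0 ≤ β * b j) :
    gibbs β (U - ∑ k, b k • Sx N k) (Sx N j) ∈ Set.Icc 0 (Real.tanh (β * b j)) := by
  set R := ∑ k ∈ Finset.univ.erase j, b k • Sx N k with hR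
  have hsplit : U - ∑ k, b k • Sx N k = (U - R) - b j • Sx N j := by
    rw [← Finset.add_sum_erase _ _ (Finset.mem_univ j), ← hR, sub_sub, add_comm R]
  have hRherm : R.IsHermitian :=
    isSelfAdjoint_sum _ fun k _ => (isHermitian_Sx k).smul (.all (b k))
  have hjR : Commute (Sz N j) R := .sum_right _ _ _ fun k hk =>
    (commute_Sz_Sx (Finset.ne_of_mem_erase hk).symm).smul_right (b k)
  rw [hsplit]
  exact gibbs_sub_smul_mem_Icc (hU.sub hRherm) (isHermitian_Sx j) (Sx_mul_self j) (isUnit_Sz j)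
    (hjU.sub_right hjR) (semiconjBy_Sz_Sx j) hβb

theorem stmt9 (N : ℕ) (hN : 2 ≤ N) (β J b : ℝ) (hβ : 0 < β) (hJ : 0 < J) (hb : 0 ≤ b)
    (g : Fin N → Fin N → ℝ) :
    0 ≤ gibbs β (HN N J b g) (Sx N ⟨0, by omega⟩) ∧
    gibbs β (HN N J b g) (Sx N ⟨0, by omega⟩) ≤ Real.tanh (β * b) := by
  rw [HN, Finset.smul_sum]
  exact stmt9_general ((isHermitian_UN g).smul (.all J)) ((commute_Sz_UN _ g).smul_right J)
    (b := fun _ => b) (mul_nonneg hβ.le hb)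
end
end

section
/- In the zero-field case b = 0, for every N ≥ 2, β > 0 and J > 0, the disorder mean of the spin-glass order parameter satisfies the exact identity E[q_N] = 1 + (2/(βJ)) · (1/(N−1)) · E[⟨U_N⟩]. -/
open Matrix MeasureTheory ProbabilityTheory

noncomputable section

def qN (N : ℕ) (β J b : ℝ) (g : Fin N → Fin N → ℝ) : ℝ :=
  (2 / ((N : ℝ) * ((N : ℝ) - 1))) * ∑ j : Fin N, ∑ k : Fin N,
    if j < k then (gibbs β (HN N J b g) (Sz N j * Sz N k)) ^ 2 else 0

/-! Without a transverse field the Hamiltonian is diagonal, so `⟨S_j^z S_k^z⟩` is a classical Ising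
mean in which the coupling `g_jk` enters the Boltzmann exponent linearly, with slope
`(β J / √N) σ_j σ_k`. The derivative of a Gibbs mean along the exponent is a covariance, and
`(σ_j σ_k)² = 1`, so Gaussian integration by parts gives
`E[g_jk ⟨σ_j σ_k⟩] = (β J / √N) (1 - E[⟨σ_j σ_k⟩²])`. Summing over the `N (N - 1) / 2` pairs turns
the left-hand sides into `-√N E[⟨U_N⟩]` and the right-hand sides into an affine function of
`E[q_N]`. -/

section GaussianIntegrationByParts

open scoped NNReal

lemma hasDerivAt_gaussianPDFReal (m : ℝ) (v : ℝ≥0) (x : ℝ) :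
    HasDerivAt (gaussianPDFReal m v) (-((x - m) / v) * gaussianPDFReal m v x) x := by
  have hexponent : HasDerivAt (fun y : ℝ => -(y - m) ^ 2 / (2 * v)) (-((x - m) / v)) x := by
    refine ((((hasDerivAt_id x).sub_const m).fun_pow 2).neg.div_const (2 * (v : ℝ))).congr_deriv ?_
    simp only [id_eq]
    ring
  refine (hexponent.exp.const_mul (√(2 * Real.pi * v))⁻¹).congr_deriv ?_
  rw [gaussianPDFReal_def]
  ring

variable {m : ℝ} {v : ℝ≥0}

lemma integrable_gaussianReal_iff (hv : v ≠ 0) {f : ℝ → ℝ} :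
    Integrable f (gaussianReal m v) ↔ Integrable fun x => f x * gaussianPDFReal m v x := by
  rw [gaussianReal_of_var_ne_zero m hv, integrable_withDensity_iff (measurable_gaussianPDF m v)
    (ae_of_all _ fun _ => gaussianPDF_lt_top)]
  simp only [toReal_gaussianPDF]

theorem integral_sub_mean_mul_gaussianReal {f f' : ℝ → ℝ} (hderiv : ∀ x, HasDerivAt f (f' x) x)
    (hmulf : Integrable (fun x => (x - m) * f x) (gaussianReal m v))
    (hf : Integrable f (gaussianReal m v)) (hf' : Integrable f' (gaussianReal m v)) :
    ∫ x, (x - m) * f x ∂gaussianReal m v = v * ∫ x, f' x ∂gaussianReal m v := by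
  rcases eq_or_ne v 0 with rfl | hv
  · simp
  have hv' : (v : ℝ) ≠ 0 := by exact_mod_cast hv
  have hdensity_deriv : Integrable
      (f * fun x => -((x - m) / v) * gaussianPDFReal m v x) := by
    refine (((integrable_gaussianReal_iff hv).1 hmulf).const_mul (-(v : ℝ)⁻¹)).congr
      (ae_of_all _ fun x => ?_)
    simp only [Pi.mul_apply]
    ring
  have hparts := integral_mul_deriv_eq_deriv_mul_of_integrable (fun x _ => hderiv x)
    (fun x _ => hasDerivAt_gaussianPDFReal m v x) hdensity_deriv
    ((integrable_gaussianReal_iff hv).1 hf') ((integrable_gaussianReal_iff hv).1 hf)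
  rw [integral_gaussianReal_eq_integral_smul hv, integral_gaussianReal_eq_integral_smul hv]
  calc ∫ x, gaussianPDFReal m v x • ((x - m) * f x)
      = -v * ∫ x, f x * (-((x - m) / v) * gaussianPDFReal m v x) := by
        rw [← integral_const_mul]
        congr with x
        rw [smul_eq_mul]
        field_simp
    _ = v * ∫ x, gaussianPDFReal m v x • f' x := by
        rw [hparts]
        simp only [smul_eq_mul, mul_comm (f' _), neg_mul_neg]

lemma integral_sub_mean_mul_prod_gaussianReal {E : Type*} [MeasurableSpace E] {ν : Measure E}
    [SFinite ν] {F F' : E × ℝ → ℝ}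
    (hderiv : ∀ y x, HasDerivAt (fun t => F (y, t)) (F' (y, x)) x)
    (hmulF : Integrable (fun z => (z.2 - m) * F z) (ν.prod (gaussianReal m v)))
    (hF : Integrable F (ν.prod (gaussianReal m v)))
    (hF' : Integrable F' (ν.prod (gaussianReal m v))) :
    ∫ z, (z.2 - m) * F z ∂ν.prod (gaussianReal m v) =
      v * ∫ z, F' z ∂ν.prod (gaussianReal m v) := by
  rw [integral_prod _ hmulF, integral_prod _ hF', ← integral_const_mul]
  refine integral_congr_ae ?_
  filter_upwards [hmulF.prod_right_ae, hF.prod_right_ae, hF'.prod_right_ae] with y hmulFy hFy hF'y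
  exact integral_sub_mean_mul_gaussianReal (hderiv y) hmulFy hFy hF'y

variable {Ω : Type*} [MeasurableSpace Ω] {μ : Measure Ω}

lemma integrable_of_hasLaw_gaussianReal {X : Ω → ℝ} (hX : HasLaw X (gaussianReal m v) μ) :
    Integrable X μ := by
  have hid : Integrable id (μ.map X) := hX.map_eq ▸ (memLp_id_gaussianReal 1).integrable le_rfl
  exact hid.comp_aemeasurable hX.aemeasurable

lemma integral_sub_mean_mul_of_indepFun {E : Type*} [MeasurableSpace E] {Y : Ω → E} {X : Ω → ℝ}
    (hY : AEMeasurable Y μ) (hX : HasLaw X (gaussianReal m v) μ) (hindep : IndepFun Y X μ)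
    {F F' : E × ℝ → ℝ} (hFm : Measurable F) (hF'm : Measurable F')
    (hderiv : ∀ y x, HasDerivAt (fun t => F (y, t)) (F' (y, x)) x)
    (hmulF : Integrable (fun ω => (X ω - m) * F (Y ω, X ω)) μ)
    (hF : Integrable (fun ω => F (Y ω, X ω)) μ) (hF' : Integrable (fun ω => F' (Y ω, X ω)) μ) :
    ∫ ω, (X ω - m) * F (Y ω, X ω) ∂μ = v * ∫ ω, F' (Y ω, X ω) ∂μ := by
  have := hX.isProbabilityMeasure
  have hlaw : HasLaw (fun ω => (Y ω, X ω)) ((μ.map Y).prod (gaussianReal m v)) μ :=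
    IndepFun.hasLaw_prod ⟨hY, rfl⟩ hX hindep
  have hmulFm : Measurable fun z : E × ℝ => (z.2 - m) * F z := by fun_prop
  have integrable_pair {G : E × ℝ → ℝ} (hGm : Measurable G)
      (hG : Integrable (fun ω => G (Y ω, X ω)) μ) :
      Integrable G ((μ.map Y).prod (gaussianReal m v)) := by
    rw [← hlaw.map_eq]
    exact (integrable_map_measure hGm.aestronglyMeasurable hlaw.aemeasurable).2 hG
  calc ∫ ω, (X ω - m) * F (Y ω, X ω) ∂μ
      = ∫ z, (z.2 - m) * F z ∂(μ.map Y).prod (gaussianReal m v) :=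
        hlaw.integral_comp hmulFm.aestronglyMeasurable
    _ = v * ∫ z, F' z ∂(μ.map Y).prod (gaussianReal m v) :=
        integral_sub_mean_mul_prod_gaussianReal hderiv (integrable_pair hmulFm hmulF)
          (integrable_pair hFm hF) (integrable_pair hF'm hF')
    _ = v * ∫ ω, F' (Y ω, X ω) ∂μ := by
        rw [← hlaw.integral_comp hF'm.aestronglyMeasurable, Function.comp_def]

variable {ι : Type*} [Finite ι] [DecidableEq ι]

lemma indepFun_update_of_iIndepFun {α : Type*} [MeasurableSpace α] {X : ι → Ω → α}
    (hindep : iIndepFun X μ) (hX : ∀ i, AEMeasurable (X i) μ) (p : ι) (c : α) :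
    IndepFun (fun ω => Function.update (fun i => X i ω) p c) (X p) μ := by
  cases nonempty_fintype ι
  have hdisjoint : Disjoint (Finset.univ.erase p) {p} := by simp
  have htuple := (hindep.indepFun_finset₀ _ _ hdisjoint hX).comp
    (measurable_updateFinset (x := fun _ => c))
    (measurable_pi_apply (⟨p, Finset.mem_singleton_self p⟩ : ({p} : Finset ι)))
  have hupdate : (fun ω => Function.update (fun i => X i ω) p c) =
      Function.updateFinset (fun _ => c) (Finset.univ.erase p) ∘ fun ω i => X i ω := by
    ext ω i
    by_cases hi : i = p <;> simp [Function.updateFinset, hi]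
  rw [hupdate]
  exact htuple

theorem integral_sub_mean_mul_of_iIndepFun {X : ι → Ω → ℝ} (hindep : iIndepFun X μ)
    (hX : ∀ i, AEMeasurable (X i) μ) {p : ι} (hXp : HasLaw (X p) (gaussianReal m v) μ)
    {f f' : (ι → ℝ) → ℝ} (hfm : Measurable f) (hf'm : Measurable f')
    (hderiv : ∀ x, HasDerivAt (fun t => f (Function.update x p t)) (f' x) (x p))
    (hmulf : Integrable (fun ω => (X p ω - m) * f fun i => X i ω) μ)
    (hf : Integrable (fun ω => f fun i => X i ω) μ)
    (hf' : Integrable (fun ω => f' fun i => X i ω) μ) :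
    ∫ ω, (X p ω - m) * f (fun i => X i ω) ∂μ = v * ∫ ω, f' (fun i => X i ω) ∂μ := by
  have hupdate : Measurable fun z : (ι → ℝ) × ℝ => Function.update z.1 p z.2 := by fun_prop
  have hY : AEMeasurable (fun ω => Function.update (fun i => X i ω) p 0) μ :=
    (hupdate.comp measurable_prodMk_right).comp_aemeasurable (aemeasurable_pi_lambda _ hX)
  have hparts := integral_sub_mean_mul_of_indepFun hY hXp
    (indepFun_update_of_iIndepFun hindep hX p 0) (F := fun z => f (Function.update z.1 p z.2))
    (F' := fun z => f' (Function.update z.1 p z.2))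
    (hfm.comp hupdate) (hf'm.comp hupdate)
    (fun y x => by simpa using hderiv (Function.update y p x))
  simp only [Function.update_idem, Function.update_eq_self] at hparts
  exact hparts hmulf hf hf'

end GaussianIntegrationByParts

section GibbsMean

variable {K : Type*} [Fintype K]

/-- The mean of `a` under the classical Gibbs measure on the finite configuration space `K` whose
weights are `exp (u σ)`; the exponent `u` absorbs the factor `-β` of the Boltzmann weight. -/
def gibbsMean (u a : K → ℝ) : ℝ :=
  (∑ σ, Real.exp (u σ) * a σ) / ∑ σ, Real.exp (u σ)

lemma gibbsMean_smul (u : K → ℝ) (c : ℝ) (a : K → ℝ) :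
    gibbsMean u (c • a) = c * gibbsMean u a := by
  simp only [gibbsMean, Pi.smul_apply, smul_eq_mul, mul_left_comm _ c, ← Finset.mul_sum,
    mul_div_assoc]

lemma gibbsMean_sum {ι : Type*} [Fintype ι] (u : K → ℝ) (a : ι → K → ℝ) :
    gibbsMean u (∑ i, a i) = ∑ i, gibbsMean u (a i) := by
  simp only [gibbsMean, Finset.sum_apply, Finset.mul_sum, ← Finset.sum_div]
  rw [Finset.sum_comm]

lemma norm_gibbsMean_le (u a : K → ℝ) : ‖gibbsMean u a‖ ≤ ‖a‖ := by
  have hZ : 0 ≤ ∑ σ, Real.exp (u σ) := Finset.sum_nonneg fun _ _ => (Real.exp_pos _).le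
  rw [gibbsMean, norm_div, Real.norm_of_nonneg hZ]
  refine div_le_of_le_mul₀ hZ (norm_nonneg a) ?_
  rw [Finset.mul_sum]
  refine norm_sum_le_of_le _ fun σ _ => ?_
  rw [norm_mul, Real.norm_of_nonneg (Real.exp_pos _).le, mul_comm]
  gcongr
  exact norm_le_pi_norm a σ

variable [Nonempty K]

lemma sum_exp_pos (u : K → ℝ) : 0 < ∑ σ, Real.exp (u σ) :=
  Finset.sum_pos (fun _ _ => Real.exp_pos _) Finset.univ_nonempty

lemma gibbsMean_one (u : K → ℝ) : gibbsMean u 1 = 1 := by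
  simp [gibbsMean, (sum_exp_pos u).ne']

@[fun_prop]
lemma continuous_gibbsMean (a : K → ℝ) : Continuous fun u => gibbsMean u a := by
  unfold gibbsMean
  exact .div (by fun_prop) (by fun_prop) fun u => (sum_exp_pos u).ne'

theorem hasDerivAt_gibbsMean {u : ℝ → K → ℝ} {u' : K → ℝ} {t : ℝ} (hu : HasDerivAt u u' t)
    (a : K → ℝ) :
    HasDerivAt (fun t => gibbsMean (u t) a)
      (gibbsMean (u t) (a * u') - gibbsMean (u t) a * gibbsMean (u t) u') t := by
  have hweight (σ : K) : HasDerivAt (fun t => Real.exp (u t σ)) (Real.exp (u t σ) * u' σ) t :=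
    (hasDerivAt_pi.1 hu σ).exp
  have hZ := (sum_exp_pos (u t)).ne'
  refine (HasDerivAt.div (HasDerivAt.fun_sum fun σ _ => (hweight σ).mul_const (a σ))
    (HasDerivAt.fun_sum fun σ _ => hweight σ) hZ).congr_deriv ?_
  simp only [gibbsMean, Pi.mul_apply, mul_right_comm _ (u' _) (a _), ← mul_assoc]
  field_simp

variable {Ω : Type*} [MeasurableSpace Ω] {μ : Measure Ω} [IsFiniteMeasure μ]

lemma integrable_gibbsMean {U : Ω → K → ℝ} (hU : AEMeasurable U μ) (a : K → ℝ) :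
    Integrable (fun ω => gibbsMean (U ω) a) μ :=
  .of_bound ((continuous_gibbsMean a).measurable.comp_aemeasurable hU).aestronglyMeasurable ‖a‖
    (ae_of_all _ fun ω => norm_gibbsMean_le (U ω) a)

lemma integrable_mul_gibbsMean {U : Ω → K → ℝ} (hU : AEMeasurable U μ) (a : K → ℝ) {X : Ω → ℝ}
    (hX : Integrable X μ) : Integrable (fun ω => X ω * gibbsMean (U ω) a) μ :=
  hX.mul_bdd (integrable_gibbsMean hU a).aestronglyMeasurable
    (ae_of_all _ fun ω => norm_gibbsMean_le (U ω) a)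

end GibbsMean

section GaussianCouplings

open scoped NNReal

lemma hasDerivAt_sum_update_smul {ι E : Type*} [Fintype ι] [DecidableEq ι] [NormedAddCommGroup E]
    [NormedSpace ℝ E] (s : ι → E) (x : ι → ℝ) (p : ι) (t : ℝ) :
    HasDerivAt (fun t => ∑ q, Function.update x p t q • s q) (s p) t := by
  refine (HasDerivAt.fun_sum fun q _ =>
    (hasDerivAt_pi.1 (hasDerivAt_update x p t) q).smul_const (s q)).congr_deriv ?_
  simp [Pi.single_apply, ite_smul]

variable {K ι Ω : Type*} [Fintype K] [Nonempty K] [Fintype ι] [MeasurableSpace Ω] {μ : Measure Ω}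
  {X : ι → Ω → ℝ} {v : ℝ≥0}

theorem integral_sub_mean_mul_gibbsMean (hindep : iIndepFun X μ) (hX : ∀ i, AEMeasurable (X i) μ)
    {p : ι} {m : ℝ} (hXp : HasLaw (X p) (gaussianReal m v) μ) (s : ι → K → ℝ) (c : ℝ)
    (a : K → ℝ) :
    ∫ ω, (X p ω - m) * gibbsMean (c • ∑ q, X q ω • s q) a ∂μ =
      v * ∫ ω, c * (gibbsMean (c • ∑ q, X q ω • s q) (a * s p) -
        gibbsMean (c • ∑ q, X q ω • s q) a * gibbsMean (c • ∑ q, X q ω • s q) (s p)) ∂μ := by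
  classical
  have := hXp.isProbabilityMeasure
  have hexponent : AEMeasurable (fun ω => c • ∑ q, X q ω • s q) μ := by fun_prop
  have hmean (b : K → ℝ) : Measurable fun x : ι → ℝ => gibbsMean (c • ∑ q, x q • s q) b :=
    Continuous.measurable (by fun_prop)
  refine integral_sub_mean_mul_of_iIndepFun hindep hX hXp
    (f := fun x => gibbsMean (c • ∑ q, x q • s q) a)
    (f' := fun x => c * (gibbsMean (c • ∑ q, x q • s q) (a * s p) -
      gibbsMean (c • ∑ q, x q • s q) a * gibbsMean (c • ∑ q, x q • s q) (s p)))
    (hmean a) (((hmean _).sub ((hmean a).mul (hmean _))).const_mul c) (fun x => ?_)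
    (integrable_mul_gibbsMean hexponent a
      ((integrable_of_hasLaw_gaussianReal hXp).sub (integrable_const m)))
    (integrable_gibbsMean hexponent a)
    (((integrable_gibbsMean hexponent _).sub
      (integrable_mul_gibbsMean hexponent _ (integrable_gibbsMean hexponent a))).const_mul c)
  refine (hasDerivAt_gibbsMean ((hasDerivAt_sum_update_smul s x p (x p)).fun_const_smul c)
    a).congr_deriv ?_
  simp only [Function.update_eq_self, mul_smul_comm, gibbsMean_smul]
  ring

theorem integral_sum_mul_gibbsMean_of_sq_eq_one (hindep : iIndepFun X μ)
    (hX : ∀ p, HasLaw (X p) (gaussianReal 0 v) μ) {s : ι → K → ℝ}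
    (hs : ∀ p, s p ^ 2 = 1) (c : ℝ) :
    ∫ ω, ∑ p, X p ω * gibbsMean (c • ∑ q, X q ω • s q) (s p) ∂μ =
      v * c * (Fintype.card ι - ∫ ω, ∑ p, gibbsMean (c • ∑ q, X q ω • s q) (s p) ^ 2 ∂μ) := by
  have := hindep.isProbabilityMeasure
  have hXm (p : ι) : AEMeasurable (X p) μ := (hX p).aemeasurable
  have hexponent : AEMeasurable (fun ω => c • ∑ q, X q ω • s q) μ := by fun_prop
  have hsq (p : ι) : Integrable (fun ω => gibbsMean (c • ∑ q, X q ω • s q) (s p) ^ 2) μ := by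
    simpa only [sq] using
      integrable_mul_gibbsMean hexponent (s p) (integrable_gibbsMean hexponent (s p))
  have hcoupling (p : ι) : ∫ ω, X p ω * gibbsMean (c • ∑ q, X q ω • s q) (s p) ∂μ =
      v * c * (1 - ∫ ω, gibbsMean (c • ∑ q, X q ω • s q) (s p) ^ 2 ∂μ) := by
    have hparts := integral_sub_mean_mul_gibbsMean hindep hXm (hX p) s c (s p)
    simp only [sub_zero, ← sq, hs, gibbsMean_one] at hparts
    rw [hparts, integral_const_mul, integral_sub (integrable_const _) (hsq p)]
    simp [mul_assoc]
  rw [integral_finsetSum _ fun p _ => integrable_mul_gibbsMean hexponent (s p)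
      (integrable_of_hasLaw_gaussianReal (hX p)), integral_finsetSum _ fun p _ => hsq p]
  simp only [hcoupling, ← Finset.mul_sum, Finset.sum_sub_distrib, Finset.sum_const,
    Finset.card_univ, nsmul_eq_mul, mul_one]

end GaussianCouplings

section ZeroField

/-- The pairs of sites `j < k`, which index the couplings of the model. -/
abbrev SitePair (N : ℕ) := {q : Fin N × Fin N // q.1 < q.2}

lemma sum_sum_ite_lt {M : Type*} [AddCommMonoid M] (N : ℕ) (F : Fin N → Fin N → M) :
    (∑ j, ∑ k, if j < k then F j k else 0) = ∑ p : SitePair N, F p.1.1 p.1.2 := by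
  rw [← Fintype.sum_prod_type' (f := fun j k => if j < k then F j k else 0), ← Finset.sum_filter]
  exact Finset.sum_subtype _ (by simp) fun q : Fin N × Fin N => F q.1 q.2

lemma card_sitePair (N : ℕ) : (Fintype.card (SitePair N) : ℝ) = N * (N - 1) / 2 := by
  rw [Fintype.card_subtype, Fintype.card_product_filter_lt, Fintype.card_fin, Nat.cast_choose_two]

/-- The product `σ_j σ_k` of the two `±1`-valued spins at the sites of a pair, as a function of the
configuration; these are the eigenvalues of `S_j^z S_k^z`. -/
def pairSpin {N : ℕ} (p : SitePair N) (σ : Conf N) : ℝ :=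
  (if σ p.1.1 = 0 then 1 else -1) * if σ p.1.2 = 0 then 1 else -1

lemma pairSpin_sq {N : ℕ} (p : SitePair N) : pairSpin p ^ 2 = 1 := by
  ext σ
  simp only [pairSpin, Pi.pow_apply, Pi.one_apply]
  split_ifs <;> norm_num

lemma Sz_mul_Sz {N : ℕ} (p : SitePair N) :
    Sz N p.1.1 * Sz N p.1.2 = diagonal fun σ => (pairSpin p σ : ℂ) := by
  rw [Sz, Sz, diagonal_mul_diagonal]
  congr with σ
  simp only [pairSpin]
  split_ifs <;> simp

lemma UN_eq_diagonal (N : ℕ) (g : Fin N → Fin N → ℝ) :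
    UN N g = diagonal fun σ =>
      ((((-(1 / √N)) • ∑ p : SitePair N, g p.1.1 p.1.2 • pairSpin p) σ : ℝ) : ℂ) := by
  rw [UN, sum_sum_ite_lt N fun j k => g j k • (Sz N j * Sz N k)]
  ext σ τ
  by_cases h : σ = τ
  · simp [Sz_mul_Sz, Matrix.sum_apply, h]
  · simp [Sz_mul_Sz, Matrix.sum_apply, h]

lemma gibbs_diagonal {n : Type*} [Fintype n] [DecidableEq n] (β : ℝ) (u a : n → ℝ) :
    gibbs β (diagonal fun σ => (u σ : ℂ)) (diagonal fun σ => (a σ : ℂ)) =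
      gibbsMean ((-β) • u) a := by
  have hexp : NormedSpace.exp ((-β) • diagonal fun σ => (u σ : ℂ)) =
      diagonal fun σ => ((Real.exp (((-β) • u) σ) : ℝ) : ℂ) := by
    rw [← diagonal_smul, exp_diagonal]
    congr with σ
    simp [Pi.coe_exp, ← Complex.exp_eq_exp_ℂ]
  rw [gibbs, hexp, diagonal_mul_diagonal, trace_diagonal, trace_diagonal]
  exact_mod_cast Complex.ofReal_re (gibbsMean ((-β) • u) a)

lemma gibbs_HN_zero_diagonal (N : ℕ) (β J : ℝ) (g : Fin N → Fin N → ℝ) (a : Conf N → ℝ) :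
    gibbs β (HN N J 0 g) (diagonal fun σ => (a σ : ℂ)) =
      gibbsMean ((β * J / √N) • ∑ p : SitePair N, g p.1.1 p.1.2 • pairSpin p) a := by
  have hHN : HN N J 0 g = diagonal fun σ =>
      ((((-(J / √N)) • ∑ p : SitePair N, g p.1.1 p.1.2 • pairSpin p) σ : ℝ) : ℂ) := by
    rw [HN, zero_smul, sub_zero, UN_eq_diagonal, ← diagonal_smul]
    congr with σ
    simp [div_eq_mul_inv, mul_assoc]
  rw [hHN, gibbs_diagonal, smul_smul, neg_mul_neg, mul_div_assoc]

lemma qN_zero_field (N : ℕ) (β J : ℝ) (g : Fin N → Fin N → ℝ) :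
    qN N β J 0 g = 2 / ((N : ℝ) * (N - 1)) * ∑ p : SitePair N,
      gibbsMean ((β * J / √N) • ∑ q : SitePair N, g q.1.1 q.1.2 • pairSpin q) (pairSpin p) ^ 2 := by
  rw [qN, sum_sum_ite_lt N fun j k => gibbs β (HN N J 0 g) (Sz N j * Sz N k) ^ 2]
  simp only [Sz_mul_Sz, gibbs_HN_zero_diagonal]

lemma gibbs_HN_zero_UN (N : ℕ) (β J : ℝ) (g : Fin N → Fin N → ℝ) :
    gibbs β (HN N J 0 g) (UN N g) = -(1 / √N) * ∑ p : SitePair N, g p.1.1 p.1.2 *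
      gibbsMean ((β * J / √N) • ∑ q : SitePair N, g q.1.1 q.1.2 • pairSpin q) (pairSpin p) := by
  rw [UN_eq_diagonal, gibbs_HN_zero_diagonal, gibbsMean_smul, gibbsMean_sum]
  simp only [gibbsMean_smul]

end ZeroField

theorem stmt12_general
    {Ω : Type*} [MeasurableSpace Ω] (μ : Measure Ω)
    (N : ℕ) (hN : 2 ≤ N) (β J : ℝ) (hβ : β ≠ 0) (hJ : J ≠ 0)
    (g : Ω → Fin N → Fin N → ℝ)
    (hgauss : ∀ j k : Fin N, j < k → HasLaw (fun ω => g ω j k) (gaussianReal 0 1) μ)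
    (hindep : iIndepFun
      (fun (p : {q : Fin N × Fin N // q.1 < q.2}) ω => g ω p.1.1 p.1.2) μ) :
    (∫ ω, qN N β J 0 (g ω) ∂μ)
      = 1 + (2 / (β * J)) * (1 / ((N : ℝ) - 1))
          * ∫ ω, gibbs β (HN N J 0 (g ω)) (UN N (g ω)) ∂μ := by
  have hN' : (2 : ℝ) ≤ N := by exact_mod_cast hN
  have hN0 : (N : ℝ) ≠ 0 := by positivity
  have hN1 : (N : ℝ) - 1 ≠ 0 := by linarith
  have hsqrt : √(N : ℝ) ^ 2 = N := Real.sq_sqrt N.cast_nonneg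
  have hparts := integral_sum_mul_gibbsMean_of_sq_eq_one hindep (fun p => hgauss _ _ p.2)
    pairSpin_sq (β * J / √N)
  simp only [qN_zero_field, gibbs_HN_zero_UN, integral_const_mul, hparts, card_sitePair]
  field_simp
  rw [hsqrt]
  push_cast
  ring

theorem stmt12
    {Ω : Type*} [MeasurableSpace Ω] (μ : Measure Ω) [IsProbabilityMeasure μ]
    (N : ℕ) (hN : 2 ≤ N) (β J : ℝ) (hβ : 0 < β) (hJ : 0 < J)
    (g : Ω → Fin N → Fin N → ℝ)
    (hmeas : ∀ j k : Fin N, Measurable fun ω => g ω j k)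
    (hgauss : ∀ j k : Fin N, j < k →
      Measure.map (fun ω => g ω j k) μ = gaussianReal 0 1)
    (hindep : iIndepFun
      (fun (p : {q : Fin N × Fin N // q.1 < q.2}) ω => g ω p.1.1 p.1.2) μ) :
    (∫ ω, qN N β J 0 (g ω) ∂μ)
      = 1 + (2 / (β * J)) * (1 / ((N : ℝ) - 1))
          * ∫ ω, gibbs β (HN N J 0 (g ω)) (UN N (g ω)) ∂μ :=
  stmt12_general μ N hN β J hβ.ne' hJ.ne' g
    (fun j k hjk => ⟨(hmeas j k).aemeasurable, hgauss j k hjk⟩) hindep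
end
end
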